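/- arXiv:1707.01210 — 3 statements merged into one kernel-verified Lean document; each statement's English description precedes it below -/
import Mathlib

section
/- For every index n with 0 ≤ n ≤ P−1, the differential-mode alien noise z_d(n) = Σ_{k=0}^{L−1} h(k) z_c(n−k) decomposes as z_d(n) = Σ_{k=0}^{L−1} h(k) z_{c-cyc}(n−k) + d(n), where the deviation term d satisfies: d(n) = Σ_{k=T+1}^{L−1−n} (z_c(−k) − z_c(P−k)) h(k+n) for 0 ≤ n ≤ L−T−2; d(n) = Σ_{k=0}^{n−(P−T)} (z_c(n−k) − z_c(n−k−P)) h(k) for P−T ≤ n ≤ P−1; and d(n) = 0 for all other n in [0, P−1]. -/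
open Finset

/-!
For `0 ≤ n < P` and a tap `0 ≤ k < L`, the sample index `n - k` lies in the window `[-T, P - T - 1]`
or in one of its two neighbouring translates by `P`. So the cyclic extension differs from the signal
only at taps `k > n + T`, where it reads one period ahead, and at taps `k ≤ n - (P - T)`, where it
reads one period behind. These two ranges of taps give the two sums of the deviation, and since
`L ≤ P` they are never both nonempty.
-/

section CyclicExtension

variable {α : Type*} {P T m : ℤ} {z : ℤ → α}

/-- The `P`-periodic sequence agreeing with `z` on the window `{-T, …, P - T - 1}`: the paper's
`z_{c-cyc}`. The window is parametrised by its offset `T`, and `%` is the Euclidean remainder, so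
that the formula is right for negative `m` too. -/
def cyclicExtension (P T : ℤ) (z : ℤ → α) (m : ℤ) : α :=
  z ((m + T) % P - T)

theorem cyclicExtension_periodic : Function.Periodic (cyclicExtension P T z) P := fun m => by
  rw [cyclicExtension, cyclicExtension, add_right_comm, Int.add_emod_right]

theorem cyclicExtension_of_mem_Ico (hm : m ∈ Set.Ico (-T) (P - T)) :
    cyclicExtension P T z m = z m := by
  obtain ⟨hTm, hmP⟩ := hm
  rw [cyclicExtension, Int.emod_eq_of_lt (by omega) (by omega), add_sub_cancel_right]

theorem cyclicExtension_of_add_mem_Ico (hm : m + P ∈ Set.Ico (-T) (P - T)) :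
    cyclicExtension P T z m = z (m + P) := by
  rw [← cyclicExtension_periodic, cyclicExtension_of_mem_Ico hm]

theorem cyclicExtension_of_sub_mem_Ico (hm : m - P ∈ Set.Ico (-T) (P - T)) :
    cyclicExtension P T z m = z (m - P) := by
  rw [← cyclicExtension_periodic.sub_eq, cyclicExtension_of_mem_Ico hm]

end CyclicExtension

section SumIcc

variable {M : Type*} [AddCommMonoid M]

theorem sum_range_natCast_eq_sum_Icc (L : ℕ) (f : ℤ → M) :
    ∑ k ∈ range L, f k = ∑ k ∈ Icc (0 : ℤ) (L - 1), f k := by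
  rw [Icc_sub_one_right_eq_Ico, Int.Ico_eq_finset_map, sum_map]
  simp

theorem sum_Icc_eq_add_of_eq_zero_on_gap {ι : Type*} [LinearOrder ι] [LocallyFiniteOrder ι]
    {a b c d : ι} {f : ι → M} (hac : a ≤ c) (hbc : b < c) (hbd : b ≤ d)
    (hf : ∀ k ∈ Icc a d, b < k → k < c → f k = 0) :
    ∑ k ∈ Icc a d, f k = ∑ k ∈ Icc a b, f k + ∑ k ∈ Icc c d, f k := by
  have hdisj : Disjoint (Icc a b) (Icc c d) := disjoint_left.2 fun k hkb hkc =>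
    (((mem_Icc.1 hkb).2.trans_lt hbc).trans_le (mem_Icc.1 hkc).1).false
  rw [← sum_union hdisj]
  refine (sum_subset (union_subset (Icc_subset_Icc_right hbd) (Icc_subset_Icc_left hac)) ?_).symm
  intro k hk hk'
  simp only [mem_union, mem_Icc, not_or, not_and, not_le] at hk hk'
  exact hf k (mem_Icc.2 hk) (hk'.1 hk.1) (lt_of_not_ge fun hck => (hk'.2 hck).not_ge hk.2)

end SumIcc

section FIRFilter

variable {R M : Type*} {P T n : ℤ} {L : ℕ} {h : ℤ → R} {z : ℤ → M}

/-- The response at time `n` to the input `z` of the filter with finite impulse response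
`h 0, …, h (L - 1)`. Taps are scalars acting on the samples, so that the input may be
vector-valued. -/
def firFilter [AddCommMonoid M] [SMul R M] (L : ℕ) (h : ℤ → R) (z : ℤ → M) (n : ℤ) : M :=
  ∑ k ∈ range L, h k • z (n - k)

variable [AddCommGroup M] [DistribSMul R M]

theorem firFilter_sub (w : ℤ → M) :
    firFilter L h z n - firFilter L h w n = firFilter L h (z - w) n := by
  simp only [firFilter, ← sum_sub_distrib, ← smul_sub, Pi.sub_apply]

theorem firFilter_eq_firFilter_cyclicExtension_add (hT : 0 ≤ T) (hTL : T ≤ L) (hTP : T ≤ P)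
    (hLP : L ≤ P + T + 1) (hn : 0 ≤ n) (hnP : n < P) :
    firFilter L h z n = firFilter L h (cyclicExtension P T z) n +
      (∑ k ∈ Icc 0 (n - (P - T)), h k • (z (n - k) - z (n - k - P)) +
        ∑ k ∈ Icc (T + 1) (L - 1 - n), h (k + n) • (z (-k) - z (P - k))) := by
  have tail_tap : ∀ k ∈ Icc 0 (n - (P - T)),
      cyclicExtension P T z (n - k) = z (n - k - P) := fun k hk => by
    rw [mem_Icc] at hk
    exact cyclicExtension_of_sub_mem_Ico ⟨by omega, by omega⟩
  have head_tap : ∀ k ∈ Icc (T + 1) (L - 1 - n),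
      cyclicExtension P T z (-k) = z (P - k) := fun k hk => by
    rw [mem_Icc] at hk
    rw [cyclicExtension_of_add_mem_Ico ⟨by omega, by omega⟩, neg_add_eq_sub]
  have gap_tap (k : ℤ) (htail : n - (P - T) < k) (hhead : k < T + 1 + n) :
      cyclicExtension P T z (n - k) = z (n - k) :=
    cyclicExtension_of_mem_Ico ⟨by omega, by omega⟩
  have head_shift : Icc (T + 1 + n) (L - 1) =
      (Icc (T + 1) (L - 1 - n)).map (addRightEmbedding n) := by
    rw [map_add_right_Icc, sub_add_cancel]
  rw [← sub_eq_iff_eq_add', firFilter_sub, firFilter,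
    sum_range_natCast_eq_sum_Icc L fun k => h k • (z - cyclicExtension P T z) (n - k),
    sum_Icc_eq_add_of_eq_zero_on_gap (b := n - (P - T)) (c := T + 1 + n)
      (by omega) (by omega) (by omega)
      fun k _ htail hhead => by rw [Pi.sub_apply, gap_tap k htail hhead, sub_self, smul_zero],
    head_shift, sum_map]
  congr 1
  · exact sum_congr rfl fun k hk => by rw [Pi.sub_apply, tail_tap k hk]
  · exact sum_congr rfl fun k hk => by
      rw [addRightEmbedding_apply, sub_add_cancel_right, Pi.sub_apply, head_tap k hk]

theorem pertone_deviation_decomposition_general {d : ℤ → M} (hT : 0 ≤ T) (hTL : T ≤ L)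
    (hLP : L ≤ P)
    (hd_head : ∀ n : ℤ, 0 ≤ n → n ≤ L - T - 2 →
      d n = ∑ k ∈ Icc (T + 1) (L - 1 - n), h (k + n) • (z (-k) - z (P - k)))
    (hd_tail : ∀ n : ℤ, P - T ≤ n → n ≤ P - 1 →
      d n = ∑ k ∈ Icc 0 (n - (P - T)), h k • (z (n - k) - z (n - k - P)))
    (hd_mid : ∀ n : ℤ, 0 ≤ n → n ≤ P - 1 → L - T - 2 < n → n < P - T → d n = 0)
    (hn : 0 ≤ n) (hnP : n ≤ P - 1) :
    firFilter L h z n = firFilter L h (cyclicExtension P T z) n + d n := by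
  rw [firFilter_eq_firFilter_cyclicExtension_add hT hTL (hTL.trans hLP) (by omega) hn
    (Int.lt_of_le_sub_one hnP)]
  congr 1
  have head_empty (hLn : L - T - 2 < n) : Icc (T + 1) (L - 1 - n) = ∅ := Icc_eq_empty (by omega)
  have tail_empty (hnT : n < P - T) : Icc 0 (n - (P - T)) = ∅ := Icc_eq_empty (by omega)
  rcases le_or_gt n (L - T - 2) with hnL | hLn
  · rw [tail_empty (by omega), sum_empty, zero_add, hd_head n hn hnL]
  · rw [head_empty hLn, sum_empty, add_zero]
    rcases le_or_gt (P - T) n with hTn | hnT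
    · rw [hd_tail n hTn hnP]
    · rw [tail_empty hnT, sum_empty, hd_mid n hn hnP hLn hnT]

end FIRFilter

/-- decomposition of the DM alien noise into a cyclic convolution part
plus the deviation term `d` over the DFT window `0 ≤ n ≤ P-1`. -/
theorem pertone_deviation_decomposition
    (P L T : ℕ) (hTL : T < L) (hLP : L ≤ P)
    (zc h zd zccyc d : ℤ → ℝ)
    (hsupp : ∀ k : ℤ, k < 0 ∨ (L : ℤ) ≤ k → h k = 0)
    (hzd : ∀ n : ℤ, zd n = ∑ k ∈ Finset.range L, h (k : ℤ) * zc (n - (k : ℤ)))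
    (hcyc : ∀ m : ℤ, zccyc m = zc ((m + (T : ℤ)) % (P : ℤ) - (T : ℤ)))
    (hd1 : ∀ n : ℤ, 0 ≤ n → n ≤ (L : ℤ) - (T : ℤ) - 2 →
      d n = ∑ k ∈ Finset.Icc ((T : ℤ) + 1) ((L : ℤ) - 1 - n),
        (zc (-k) - zc ((P : ℤ) - k)) * h (k + n))
    (hd2 : ∀ n : ℤ, (P : ℤ) - (T : ℤ) ≤ n → n ≤ (P : ℤ) - 1 →
      d n = ∑ k ∈ Finset.Icc (0 : ℤ) (n - ((P : ℤ) - (T : ℤ))),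
        (zc (n - k) - zc (n - k - (P : ℤ))) * h k)
    (hd3 : ∀ n : ℤ, 0 ≤ n → n ≤ (P : ℤ) - 1 →
      (L : ℤ) - (T : ℤ) - 2 < n → n < (P : ℤ) - (T : ℤ) → d n = 0) :
    ∀ n : ℤ, 0 ≤ n → n ≤ (P : ℤ) - 1 →
      zd n = (∑ k ∈ Finset.range L, h (k : ℤ) * zccyc (n - (k : ℤ))) + d n := by
  obtain rfl : zccyc = cyclicExtension P T zc := funext hcyc
  simp only [mul_comm _ (h _)] at hd1 hd2
  exact fun n hn hnP => (hzd n).trans <|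
    pertone_deviation_decomposition_general (h := h) (z := zc) (Nat.cast_nonneg T)
      (Nat.cast_le.2 hTL.le) (Nat.cast_le.2 hLP) hd1 hd2 hd3 hn hnP
end

section
/- The DFT D(q) = Σ_{n=0}^{P−1} d(n) ω^{nq} of the deviation term admits the regrouping D(q) = Σ_{m=T+1}^{L−1} R_m(q) h(m) ω^{mq} + Σ_{m=0}^{T−1} S_m(q) h(m) ω^{mq}, where R_m(q) = Σ_{k=T+1}^{m} (z_c(−k) − z_c(P−k)) ω^{(P−k)q} and S_m(q) = Σ_{j=0}^{T−1−m} (z_c(P−T+j) − z_c(−T+j)) ω^{(j−T)q}. -/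
open Finset

/-!
The deviation vanishes except on its first `L - 1 - T` samples, where it is the correlation of `h`
with `k ↦ zc (-k) - zc (P - k)`, and on its last `T` samples, where it is the convolution of `h`
with `j ↦ zc (P - T + j) - zc (-T + j)`. In the transform of either piece, collect the terms that
contain `h m`: this swaps a sum over a triangle, and `ω ^ P = 1` splits the factor `ω ^ (n * q)`
of each term into `ω ^ (m * q)` and a power of `ω` that does not involve `h`.
-/

section Sums

variable {M : Type*} [AddCommMonoid M]

lemma sum_Icc_natCast (a b : ℕ) (f : ℤ → M) :
    ∑ k ∈ Icc (a : ℤ) b, f k = ∑ k ∈ Icc a b, f k := by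
  have map_Icc : Icc (a : ℤ) b = (Icc a b).map Nat.castEmbedding := by
    ext k
    simp only [mem_Icc, mem_map, Nat.castEmbedding_apply]
    exact ⟨fun hk ↦ ⟨k.toNat, by omega⟩, by rintro ⟨j, hj, rfl⟩; omega⟩
  rw [map_Icc, sum_map]
  rfl

lemma sum_Icc_convolution_eq_sum_range {A : Type*} [NonUnitalNonAssocSemiring A] (v h : ℤ → A)
    (c : ℤ) (i : ℕ) :
    ∑ k ∈ Icc (0 : ℤ) i, v (c + i - k) * h k = ∑ k ∈ range (i + 1), v (c + (i - k : ℕ)) * h k := by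
  rw [← Nat.cast_zero, sum_Icc_natCast, ← Nat.range_succ_eq_Icc_zero]
  refine sum_congr rfl fun k hk ↦ ?_
  rw [Nat.cast_sub (mem_range_succ_iff.1 hk), add_sub_assoc]

lemma sum_range_eq_sum_range_add_sum_range_of_eq_zero {a b n : ℕ} (f : ℕ → M) (hab : a ≤ b)
    (hbn : b ≤ n) (hf : ∀ i, a ≤ i → i < b → f i = 0) :
    ∑ i ∈ range n, f i = ∑ i ∈ range a, f i + ∑ i ∈ range (n - b), f (b + i) := by
  have middle : ∑ i ∈ Ico a b, f i = 0 :=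
    sum_eq_zero fun i hi ↦ hf i (mem_Ico.1 hi).1 (mem_Ico.1 hi).2
  rw [← sum_range_add_sum_Ico f hbn, ← sum_range_add_sum_Ico f hab, middle, add_zero,
    sum_Ico_eq_sum_range]

lemma sum_range_sum_Icc_add_eq_sum_Icc_sum_Icc (a b : ℕ) (f : ℕ → ℕ → M) :
    ∑ n ∈ range (b + 1 - a), ∑ k ∈ Icc a (b - n), f k (k + n) =
      ∑ m ∈ Icc a b, ∑ k ∈ Icc a m, f k m := by
  calc
    _ = ∑ k ∈ Ico a (b + 1), ∑ n ∈ range (b + 1 - k), f k (k + n) :=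
      sum_comm' fun n k ↦ by simp only [mem_range, mem_Icc, mem_Ico]; omega
    _ = ∑ k ∈ Ico a (b + 1), ∑ m ∈ Ico k (b + 1), f k m := by simp only [sum_Ico_eq_sum_range]
    _ = _ := by rw [sum_Ico_Ico_comm]; simp only [Ico_add_one_right_eq_Icc]

end Sums

lemma zpow_mul_mul_pow_mul_of_modEq {G : Type*} [GroupWithZero G] {ω : G} {P : ℕ} (hω₀ : ω ≠ 0)
    (hω : ω ^ P = 1) {a : ℤ} {m n : ℕ} (h : a + m ≡ n [ZMOD P]) (q : ℕ) :
    ω ^ (a * q) * ω ^ (m * q) = ω ^ (n * q) := by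
  obtain ⟨c, hc⟩ := h.dvd
  have exponent : (n * q : ℤ) = a * q + m * q + P * (c * q) := by linear_combination q * hc
  have period : ω ^ (P * (c * q) : ℤ) = 1 := by rw [zpow_mul, zpow_natCast, hω, one_zpow]
  rw [← zpow_natCast, ← zpow_natCast, Nat.cast_mul, Nat.cast_mul, exponent, zpow_add₀ hω₀, period,
    mul_one, zpow_add₀ hω₀]

section DFT

variable {K : Type*} [Field K] {ω : K} {P : ℕ}

lemma sum_correlation_mul_pow_eq (hω₀ : ω ≠ 0) (hω : ω ^ P = 1) (a b q : ℕ) (u h : ℕ → K) :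
    ∑ n ∈ range (b + 1 - a), (∑ k ∈ Icc a (b - n), u k * h (k + n)) * ω ^ (n * q) =
      ∑ m ∈ Icc a b, (∑ k ∈ Icc a m, u k * ω ^ (((P : ℤ) - k) * q)) * h m * ω ^ (m * q) := by
  have weight (k n : ℕ) : ω ^ (((P : ℤ) - k) * q) * ω ^ ((k + n) * q) = ω ^ (n * q) :=
    zpow_mul_mul_pow_mul_of_modEq hω₀ hω (Int.modEq_iff_dvd.2 ⟨-1, by push_cast; ring⟩) q
  simp only [sum_mul]
  rw [← sum_range_sum_Icc_add_eq_sum_Icc_sum_Icc]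
  refine sum_congr rfl fun n _ ↦ sum_congr rfl fun k _ ↦ ?_
  rw [← weight k n]
  ring

lemma sum_convolution_mul_pow_eq (hω₀ : ω ≠ 0) (hω : ω ^ P = 1) {T : ℕ} (hTP : T ≤ P) (q : ℕ)
    (v h : ℕ → K) :
    ∑ i ∈ range T, (∑ k ∈ range (i + 1), v (i - k) * h k) * ω ^ ((P - T + i) * q) =
      ∑ m ∈ range T,
        (∑ j ∈ range (T - m), v j * ω ^ (((j : ℤ) - T) * q)) * h m * ω ^ (m * q) := by
  have weight {i k : ℕ} (hki : k ≤ i) :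
      ω ^ ((((i - k : ℕ) : ℤ) - T) * q) * ω ^ (k * q) = ω ^ ((P - T + i) * q) :=
    zpow_mul_mul_pow_mul_of_modEq hω₀ hω (Int.modEq_iff_dvd.2 ⟨1, by omega⟩) q
  simp only [sum_mul]
  rw [← sum_range_diag_flip T fun m j ↦ v j * ω ^ (((j : ℤ) - T) * q) * h m * ω ^ (m * q)]
  refine sum_congr rfl fun i _ ↦ sum_congr rfl fun k hk ↦ ?_
  rw [← weight (mem_range_succ_iff.1 hk)]
  ring

end DFT

lemma exp_neg_two_pi_mul_I_div_pow_eq_one {P : ℕ} (hP : P ≠ 0) :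
    Complex.exp (-(2 * Real.pi * Complex.I) / P) ^ P = 1 := by
  rw [neg_div, Complex.exp_neg, inv_pow, (Complex.isPrimitiveRoot_exp P hP).pow_eq_one, inv_one]

theorem pertone_deviation_dft_regrouping_general
    {A K : Type*} [CommRing A] [Field K] [Algebra A K] {P L T : ℕ}
    (hP : P ≠ 0) (hTP : T ≤ P) (hLP : L ≤ P) (zc h d : ℤ → A)
    (hd_head : ∀ n : ℤ, 0 ≤ n → n ≤ (L : ℤ) - T - 2 →
      d n = ∑ k ∈ Icc ((T : ℤ) + 1) (L - 1 - n), (zc (-k) - zc (P - k)) * h (k + n))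
    (hd_tail : ∀ n : ℤ, (P : ℤ) - T ≤ n → n ≤ (P : ℤ) - 1 →
      d n = ∑ k ∈ Icc (0 : ℤ) (n - (P - T)), (zc (n - k) - zc (n - k - P)) * h k)
    (hd_middle : ∀ n : ℤ, 0 ≤ n → n ≤ (P : ℤ) - 1 → (L : ℤ) - T - 2 < n → n < (P : ℤ) - T →
      d n = 0)
    {ω : K} (hω : ω ^ P = 1) (q : ℕ) :
    ∑ n ∈ range P, algebraMap A K (d n) * ω ^ (n * q) =
      ∑ m ∈ Icc (T + 1) (L - 1), (∑ k ∈ Icc (T + 1) m,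
          algebraMap A K (zc (-k) - zc (P - k)) * ω ^ (((P : ℤ) - k) * q)) *
        algebraMap A K (h m) * ω ^ (m * q) +
      ∑ m ∈ range T, (∑ j ∈ range (T - m),
          algebraMap A K (zc (P - T + j) - zc (-T + j)) * ω ^ (((j : ℤ) - T) * q)) *
        algebraMap A K (h m) * ω ^ (m * q) := by
  have hω₀ : ω ≠ 0 := (IsUnit.of_pow_eq_one hω hP).ne_zero
  have head {n : ℕ} (hn : n < L - 1 - T) : d n =
      ∑ k ∈ Icc (T + 1) (L - 1 - n), (zc (-k) - zc (P - k)) * h (k + n : ℕ) := by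
    have bound : (L : ℤ) - 1 - n = (L - 1 - n : ℕ) := by omega
    rw [hd_head n (by omega) (by omega), bound, ← Nat.cast_succ, sum_Icc_natCast]
    simp only [Nat.cast_add]
  have tail {i : ℕ} (hi : i < T) : d (P - T + i : ℕ) =
      ∑ k ∈ range (i + 1), (zc (P - T + (i - k : ℕ)) - zc (-T + (i - k : ℕ))) * h k := by
    have position : ((P - T + i : ℕ) : ℤ) = P - T + i := by omega
    have shift (j : ℤ) : (P : ℤ) - T + j - P = -T + j := by ring
    rw [hd_tail _ (by omega) (by omega), position, add_sub_cancel_left,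
      sum_Icc_convolution_eq_sum_range (fun n ↦ zc n - zc (n - P))]
    simp only [shift]
  have middle (n : ℕ) (hn : L - 1 - T ≤ n) (hn' : n < P - T) :
      algebraMap A K (d n) * ω ^ (n * q) = 0 := by
    rw [hd_middle n (by omega) (by omega) (by omega) (by omega), map_zero, zero_mul]
  rw [sum_range_eq_sum_range_add_sum_range_of_eq_zero _ (by omega) (Nat.sub_le P T) middle,
    Nat.sub_sub_self hTP, ← sum_correlation_mul_pow_eq hω₀ hω, Nat.add_sub_add_right,
    ← sum_convolution_mul_pow_eq hω₀ hω hTP q fun j ↦ algebraMap A K (zc (P - T + j) - zc (-T + j))]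
  congr 1
  · refine sum_congr rfl fun n hn ↦ ?_
    simp only [head (mem_range.1 hn), map_sum, map_mul]
  · refine sum_congr rfl fun i hi ↦ ?_
    simp only [tail (mem_range.1 hi), map_sum, map_mul]

/-- regrouping of the deviation DFT `D(q)` in terms of windowed
DFT quantities `R_m(q)` and `S_m(q)`. -/
theorem pertone_deviation_dft_regrouping
    (P L T : ℕ) (hP : 1 ≤ P) (hTL : T < L) (hLP : L ≤ P)
    (zc h d : ℤ → ℝ)
    (hsupp : ∀ k : ℤ, k < 0 ∨ (L : ℤ) ≤ k → h k = 0)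
    (hd1 : ∀ n : ℤ, 0 ≤ n → n ≤ (L : ℤ) - (T : ℤ) - 2 →
      d n = ∑ k ∈ Finset.Icc ((T : ℤ) + 1) ((L : ℤ) - 1 - n),
        (zc (-k) - zc ((P : ℤ) - k)) * h (k + n))
    (hd2 : ∀ n : ℤ, (P : ℤ) - (T : ℤ) ≤ n → n ≤ (P : ℤ) - 1 →
      d n = ∑ k ∈ Finset.Icc (0 : ℤ) (n - ((P : ℤ) - (T : ℤ))),
        (zc (n - k) - zc (n - k - (P : ℤ))) * h k)
    (hd3 : ∀ n : ℤ, 0 ≤ n → n ≤ (P : ℤ) - 1 →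
      (L : ℤ) - (T : ℤ) - 2 < n → n < (P : ℤ) - (T : ℤ) → d n = 0)
    (ω : ℂ) (hω : ω = Complex.exp (-(2 * Real.pi * Complex.I) / (P : ℂ)))
    (R S : ℕ → ℕ → ℂ)
    (hR : ∀ m q : ℕ, R m q = ∑ k ∈ Finset.Icc (T + 1) m,
      ((zc (-(k : ℤ)) - zc ((P : ℤ) - (k : ℤ)) : ℝ) : ℂ) * ω ^ (((P : ℤ) - (k : ℤ)) * (q : ℤ)))
    (hS : ∀ m q : ℕ, S m q = ∑ j ∈ Finset.range (T - m),
      ((zc ((P : ℤ) - (T : ℤ) + (j : ℤ)) - zc (-(T : ℤ) + (j : ℤ)) : ℝ) : ℂ)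
        * ω ^ (((j : ℤ) - (T : ℤ)) * (q : ℤ))) :
    ∀ q : ℕ,
      ∑ n ∈ Finset.range P, (d (n : ℤ) : ℂ) * ω ^ (n * q)
        = (∑ m ∈ Finset.Icc (T + 1) (L - 1), R m q * (h (m : ℤ) : ℂ) * ω ^ (m * q))
          + ∑ m ∈ Finset.range T, S m q * (h (m : ℤ) : ℂ) * ω ^ (m * q) := by
  have hP₀ : P ≠ 0 := Nat.one_le_iff_ne_zero.1 hP
  simp only [hR, hS]
  exact pertone_deviation_dft_regrouping_general hP₀ (hTL.le.trans hLP) hLP zc h d hd1 hd2 hd3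
    (hω ▸ exp_neg_two_pi_mul_I_div_pow_eq_one hP₀)
end

section
/- For every m with T+1 ≤ m ≤ L−1 and every q, the windowed-DFT quantity R_m(q) = Σ_{k=T+1}^{m} (z_c(−k) − z_c(P−k)) ω^{(P−k)q} equals the circular convolution (1/P) Σ_{k=0}^{P−1} Z_c^{start-res}(q−k) B_m(k), where Z_c^{start-res}(p) = Σ_{k=−T}^{P−T−1} (z_c(k−P) − z_c(k)) ω^{kp}, B_m(p) = Σ_{k=P−m}^{P−T−1} ω^{kp}, and the argument q−k of Z_c^{start-res} is taken modulo P. -/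
open Finset

/-!
Expanding both transforms, the sum over frequencies of the cross term of `i` and `j` is
`∑ k, ω ^ ((j - i) * k)`, which vanishes unless `j ≡ i` modulo `P`. The window of the first
transform has length `P` and contains that of the second, so only `i = j` survives: circular
convolution with `B_m` cuts the sequence `z_c (k - P) - z_c k` down to the window of `B_m`,
and reflecting `k ↦ P - k` gives `R_m`.
-/

theorem sum_Icc_natCast_sub_eq_sum_Icc_int {M : Type*} [AddCommMonoid M] (F : ℤ → M) (c : ℤ)
    (a b : ℕ) : ∑ k ∈ Icc a b, F (c - k) = ∑ j ∈ Icc (c - b) (c - a), F j := by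
  refine sum_bij' (fun k _ ↦ c - k) (fun j _ ↦ (c - j).toNat) ?_ ?_ ?_ ?_ (fun _ _ ↦ rfl) <;>
    grind

theorem eq_of_intModEq_of_mem_Icc {n : ℕ} {a i j : ℤ} (hi : i ∈ Icc a (a + n - 1))
    (hj : j ∈ Icc a (a + n - 1)) (hij : i ≡ j [ZMOD n]) : i = j := by
  rw [mem_Icc] at hi hj
  have hsub : j - i = 0 :=
    Int.eq_zero_of_abs_lt_dvd hij.dvd (abs_lt.mpr ⟨by omega, by omega⟩)
  omega

theorem isPrimitiveRoot_exp_neg_two_pi_mul_I_div (n : ℕ) [NeZero n] :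
    IsPrimitiveRoot (Complex.exp (-(2 * Real.pi * Complex.I) / (n : ℂ))) n := by
  rw [neg_div, Complex.exp_neg]
  exact (Complex.isPrimitiveRoot_exp n (NeZero.ne n)).inv

theorem zpow_emod_of_pow_eq_one {G₀ : Type*} [GroupWithZero G₀] {x : G₀} {n : ℕ}
    (hx : x ^ n = 1) (a : ℤ) : x ^ (a % n) = x ^ a := by
  obtain rfl | hn := eq_or_ne n 0
  · simp
  · lift x to G₀ˣ using IsUnit.of_pow_eq_one hx hn
    norm_cast at hx ⊢
    exact (zpow_eq_zpow_emod' a hx).symm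

section Field

variable {K : Type*} [Field K] {ω : K} {P : ℕ}

theorem sum_range_zpow_mul_of_isPrimitiveRoot (hω : IsPrimitiveRoot ω P) (d : ℤ) :
    ∑ k ∈ range P, ω ^ (d * k) = if (P : ℤ) ∣ d then (P : K) else 0 := by
  simp only [zpow_mul, zpow_natCast]
  split_ifs with hd
  · simp [(hω.zpow_eq_one_iff_dvd d).mpr hd]
  · have hne : ω ^ d ≠ 1 := mt (hω.zpow_eq_one_iff_dvd d).mp hd
    have hpow : (ω ^ d) ^ P = 1 := by
      rw [← zpow_natCast, zpow_comm, zpow_natCast, hω.pow_eq_one, one_zpow]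
    rw [geom_sum_eq hne, hpow, sub_self, zero_div]

/-- The discrete Fourier transform, with kernel `ω ^ (k * p)`, of the restriction of the sequence
`f` to the finite window `s`. Frequencies `p` are integers; periodicity in `p` is not built in. -/
def windowDFT (ω : K) (s : Finset ℤ) (f : ℤ → K) (p : ℤ) : K :=
  ∑ k ∈ s, f k * ω ^ (k * p)

theorem windowDFT_emod (hω : ω ^ P = 1) (s : Finset ℤ) (f : ℤ → K) (p : ℤ) :
    windowDFT ω s f (p % P) = windowDFT ω s f p := by
  refine sum_congr rfl fun k _ ↦ ?_
  rw [mul_comm k, mul_comm k, zpow_mul, zpow_mul, zpow_emod_of_pow_eq_one hω]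

theorem sum_windowDFT_sub_mul_windowDFT [NeZero P] (hω : IsPrimitiveRoot ω P) {s t : Finset ℤ}
    (hst : ∀ i ∈ s, ∀ j ∈ t, i ≡ j [ZMOD P] → i = j) (f g : ℤ → K) (q : ℤ) :
    ∑ k ∈ range P, windowDFT ω s f (q - k) * windowDFT ω t g k =
      P * windowDFT ω (s ∩ t) (f * g) q := by
  have hω₀ : ω ≠ 0 := hω.ne_zero (NeZero.ne P)
  have hkernel (i j : ℤ) (k : ℕ) :
      f i * ω ^ (i * (q - k)) * (g j * ω ^ (j * k)) =
        f i * g j * ω ^ (i * q) * ω ^ ((j - i) * k) := by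
    rw [mul_mul_mul_comm, ← zpow_add₀ hω₀, mul_assoc (f i * g j), ← zpow_add₀ hω₀]
    ring_nf
  have horth : ∀ i ∈ s, ∀ j ∈ t,
      ∑ k ∈ range P, ω ^ ((j - i) * k) = if i = j then (P : K) else 0 := by
    intro i hi j hj
    have hdvd : (P : ℤ) ∣ j - i ↔ i = j :=
      ⟨fun h ↦ hst i hi j hj (Int.modEq_iff_dvd.mpr h), fun h ↦ by simp [h]⟩
    simp only [sum_range_zpow_mul_of_isPrimitiveRoot hω, hdvd]
  calc ∑ k ∈ range P, windowDFT ω s f (q - k) * windowDFT ω t g k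
      = ∑ i ∈ s, ∑ j ∈ t, f i * g j * ω ^ (i * q) * ∑ k ∈ range P, ω ^ ((j - i) * k) := by
        simp_rw [windowDFT, sum_mul_sum, hkernel, mul_sum]
        rw [sum_comm]
        exact sum_congr rfl fun i _ ↦ sum_comm
    _ = ∑ i ∈ s, ∑ j ∈ t, f i * g j * ω ^ (i * q) * if i = j then (P : K) else 0 :=
        sum_congr rfl fun i hi ↦ sum_congr rfl fun j hj ↦ by rw [horth i hi j hj]
    _ = P * windowDFT ω (s ∩ t) (f * g) q := by
        simp [windowDFT, mul_sum, sum_ite_mem, mul_comm]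

theorem Rm_as_circular_convolution_general [NeZero P] (hω : IsPrimitiveRoot ω P) (zc : ℤ → K)
    {T m : ℕ} (hm : m ≤ P + T) (q : ℤ) :
    ∑ k ∈ Icc (T + 1) m, (zc (-(k : ℤ)) - zc (P - k)) * ω ^ (((P : ℤ) - k) * q) =
      1 / (P : K) * ∑ k ∈ range P,
        windowDFT ω (Icc (-(T : ℤ)) (P - T - 1)) (fun k ↦ zc (k - P) - zc k) ((q - k) % P) *
          windowDFT ω (Icc ((P : ℤ) - m) (P - T - 1)) 1 k := by
  have hP : (P : K) ≠ 0 := hω.neZero'.ne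
  have hsubset : Icc ((P : ℤ) - m) (P - T - 1) ⊆ Icc (-(T : ℤ)) (P - T - 1) :=
    Icc_subset_Icc_left (by omega)
  have hwindow : Icc (-(T : ℤ)) (P - T - 1) = Icc (-(T : ℤ)) (-T + P - 1) := by
    congr 1
    ring
  have hincongruent : ∀ i ∈ Icc (-(T : ℤ)) (P - T - 1), ∀ j ∈ Icc ((P : ℤ) - m) (P - T - 1),
      i ≡ j [ZMOD P] → i = j := fun i hi j hj ↦
    eq_of_intModEq_of_mem_Icc (hwindow ▸ hi) (hwindow ▸ hsubset hj)
  simp only [windowDFT_emod hω.pow_eq_one]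
  rw [sum_windowDFT_sub_mul_windowDFT hω hincongruent, inter_eq_right.mpr hsubset, mul_one,
    one_div, inv_mul_cancel_left₀ hP, windowDFT, sub_sub, ← Nat.cast_add_one,
    ← sum_Icc_natCast_sub_eq_sum_Icc_int]
  simp only [sub_sub_cancel_left]

end Field

/-- `R_m(q)` equals the circular convolution of `Z_c^{start-res}` with the
rectangular-window DFT `B_m`, with the frequency argument taken modulo `P`. -/
theorem Rm_as_circular_convolution
    (P L T : ℕ) (hP : 1 ≤ P) (hTL : T < L) (hLP : L ≤ P)
    (zc : ℤ → ℝ)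
    (ω : ℂ) (hω : ω = Complex.exp (-(2 * Real.pi * Complex.I) / (P : ℂ)))
    (Zstart : ℤ → ℂ)
    (hZ : ∀ p : ℤ, Zstart p = ∑ k ∈ Finset.Icc (-(T : ℤ)) ((P : ℤ) - (T : ℤ) - 1),
      ((zc (k - (P : ℤ)) - zc k : ℝ) : ℂ) * ω ^ (k * p))
    (B : ℕ → ℤ → ℂ)
    (hB : ∀ (m : ℕ) (p : ℤ), B m p = ∑ k ∈ Finset.Icc ((P : ℤ) - (m : ℤ)) ((P : ℤ) - (T : ℤ) - 1),
      ω ^ (k * p)) :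
    ∀ m : ℕ, T + 1 ≤ m → m ≤ L - 1 → ∀ q : ℕ,
      (∑ k ∈ Finset.Icc (T + 1) m,
          ((zc (-(k : ℤ)) - zc ((P : ℤ) - (k : ℤ)) : ℝ) : ℂ) * ω ^ (((P : ℤ) - (k : ℤ)) * (q : ℤ)))
        = (1 / (P : ℂ)) * ∑ k ∈ Finset.range P,
            Zstart (((q : ℤ) - (k : ℤ)) % (P : ℤ)) * B m (k : ℤ) := by
  intro m _ hmL q
  have : NeZero P := ⟨by omega⟩
  have hprim : IsPrimitiveRoot ω P := hω ▸ isPrimitiveRoot_exp_neg_two_pi_mul_I_div P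
  simpa [windowDFT, hZ, hB] using Rm_as_circular_convolution_general hprim
    (fun k ↦ (zc k : ℂ)) (by omega : m ≤ P + T) q
end
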